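/- There is no deterministic matrix M = ⟨V, ⊞_M, D⟩ with V a finite set such that ⊢_M = ⊢_⊞, and there is no such finite deterministic matrix with ⊩_M = ⊩_⊞. -/

import Mathlib

/-- Formulas built from countably many propositional variables with a single
binary connective `⊞` (platypus). -/
inductive Fm : Type where
  | var : ℕ → Fm
  | pl : Fm → Fm → Fm
deriving DecidableEq

namespace Fm

/-- The set of propositional variables occurring in a formula. -/
def vars : Fm → Set ℕ
  | var n => {n}
  | pl a b => vars a ∪ vars b

/-- A `𝔅_⊞`-valuation: a two-valued function such that
`v (φ ⊞ ψ) ∈ {min (v φ) (v ψ), max (v φ) (v ψ)}`. -/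
def IsVal (v : Fm → Bool) : Prop :=
  ∀ a b : Fm, v (a.pl b) = (v a && v b) ∨ v (a.pl b) = (v a || v b)

/-- The multiple-conclusion consequence `Γ ⊩_⊞ Δ`. -/
def Mc (Γ Δ : Set Fm) : Prop :=
  ∀ v : Fm → Bool, IsVal v → (∀ φ ∈ Γ, v φ = true) → ∃ ψ ∈ Δ, v ψ = true

/-- The single-conclusion consequence `Γ ⊢_⊞ φ`. -/
def Sc (Γ : Set Fm) (φ : Fm) : Prop := Mc Γ {φ}

end Fm

namespace Fm

/-- An `M`-valuation for a deterministic matrix `⟨V, op, D⟩`. -/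
def IsMatVal {V : Type} (op : V → V → V) (v : Fm → V) : Prop :=
  ∀ a b : Fm, v (a.pl b) = op (v a) (v b)

/-- The multiple-conclusion consequence `Γ ⊩_M Δ` of a deterministic matrix. -/
def MatMc {V : Type} (op : V → V → V) (D : Set V) (Γ Δ : Set Fm) : Prop :=
  ∀ v : Fm → V, IsMatVal op v → (∀ φ ∈ Γ, v φ ∈ D) → ∃ ψ ∈ Δ, v ψ ∈ D

/-- The single-conclusion consequence `Γ ⊢_M φ` of a deterministic matrix. -/
def MatSc {V : Type} (op : V → V → V) (D : Set V) (Γ : Set Fm) (φ : Fm) : Prop :=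
  MatMc op D Γ {φ}

end Fm

namespace Fm

def ff : ℕ → Fm
  | 0 => var 1
  | n + 1 => pl (var 0) (ff n)

def dep : Fm → ℕ
  | var _ => 0
  | pl _ b => dep b + 1

def vv (N : ℕ) : Fm → Bool
  | var n => n == 0
  | pl a b => if dep b + 1 ≤ N then (vv N a && vv N b) else (vv N a || vv N b)

theorem isVal_vv (N : ℕ) : IsVal (vv N) := by
  intro a b
  by_cases h : dep b + 1 ≤ N <;> simp [vv, h]

theorem dep_ff (n : ℕ) : dep (ff n) = n := by
  induction n with
  | zero => rfl
  | succ n ih => simp [ff, dep, ih]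

theorem vv_ff_le (N n : ℕ) (h : n ≤ N) : vv N (ff n) = false := by
  induction n with
  | zero => rfl
  | succ n ih =>
    have h2 := ih (by omega)
    simp [ff, vv, dep_ff, h, h2]

theorem vv_ff_gt (N n : ℕ) (h : N < n) : vv N (ff n) = true := by
  cases n with
  | zero => omega
  | succ n =>
    have h2 : ¬ (n + 1 ≤ N) := by omega
    simp [ff, vv, dep_ff, h2]

theorem eval_ff {V : Type} (op : V → V → V) (v : Fm → V) (hv : IsMatVal op v) (n : ℕ) :
    v (ff n) = (op (v (var 0)))^[n] (v (var 1)) := by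
  induction n with
  | zero => rfl
  | succ n ih => rw [Function.iterate_succ_apply', ← ih, ff, hv]

theorem no_sc (V : Type) (_ : Finite V) (op : V → V → V) (D : Set V)
    (H : ∀ (Γ : Set Fm) (φ : Fm), MatSc op D Γ φ ↔ Sc Γ φ) : False := by
  obtain ⟨i, j, hij, he⟩ := Finite.exists_ne_map_eq_of_infinite
    (fun n : ℕ => fun (x y : V) => (op x)^[n] y)
  wlog hlt : i < j generalizing i j
  · exact this j i hij.symm he.symm (by omega)
  have h1 : MatSc op D {ff j} (ff i) := by
    intro v hv hΓ
    refine ⟨ff i, rfl, ?_⟩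
    have h2 := hΓ (ff j) rfl
    rw [eval_ff op v hv] at h2 ⊢
    have h3 := congrFun (congrFun he (v (var 0))) (v (var 1))
    rwa [h3]
  obtain ⟨ψ, hψ, h⟩ := (H _ _).1 h1 (vv i) (isVal_vv i) (by
    intro φ hφ
    rw [Set.mem_singleton_iff.1 hφ]
    exact vv_ff_gt i j hlt)
  rw [Set.mem_singleton_iff.1 hψ, vv_ff_le i i le_rfl] at h
  cases h

end Fm

open Fm in
/-- no finite deterministic matrix characterizes `⊢_⊞`, and no
finite deterministic matrix characterizes `⊩_⊞`. -/
theorem platypus_no_finite_matrix :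
    (¬ ∃ (V : Type) (_ : Finite V) (op : V → V → V) (D : Set V),
        ∀ (Γ : Set Fm) (φ : Fm), MatSc op D Γ φ ↔ Sc Γ φ) ∧
    (¬ ∃ (V : Type) (_ : Finite V) (op : V → V → V) (D : Set V),
        ∀ Γ Δ : Set Fm, MatMc op D Γ Δ ↔ Mc Γ Δ) := by
  refine ⟨?_, ?_⟩
  · rintro ⟨V, hV, op, D, H⟩
    exact no_sc V hV op D H
  · rintro ⟨V, hV, op, D, H⟩
    exact no_sc V hV op D (fun Γ φ => H Γ {φ})
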